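/- arXiv:math/0505333 — 4 statements merged into one kernel-verified Lean document; each statement's English description precedes it below -/
import Mathlib

section
/- Let Θ ⊆ ℝ^M be convex and closed, let β > 0, and let V : Θ → ℝ be α-strongly convex with respect to ‖·‖₁ (α > 0) and lower semicontinuous. Assume that for every z ∈ ℝ^M the function θ ↦ zᵀθ + β V(θ) attains its minimum over Θ; this minimizer is unique, denote it x(z). Then for all z₁, z₂ ∈ ℝ^M: ‖x(z₁) − x(z₂)‖₁ ≤ (1/(αβ)) ‖z₁ − z₂‖∞. -/
/-!
Write `f z θ = zᵀθ + β V(θ)`. Since `f z` is `αβ`-strongly convex and minimal at `x z`, it grows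
quadratically there: `f z (x z) + (αβ/2) ‖θ - x z‖₁² ≤ f z θ` on `Θ` (`quadratic_growth`).
Adding this inequality for `z₁` at `θ = x z₂` to the one for `z₂` at `θ = x z₁` cancels the values
of `V` and gives `αβ ‖x z₁ - x z₂‖₁² ≤ (z₁ - z₂)ᵀ(x z₂ - x z₁)`. Hölder's inequality
(`sum_mul_le_linfnorm_mul_l1norm`) bounds the right side by `‖z₁ - z₂‖_∞ ‖x z₁ - x z₂‖₁`, and one
factor `‖x z₁ - x z₂‖₁` is divided out.
-/

open Finset

noncomputable section

/-- The `λ`-simplex `Θ_{M,λ}` in `ℝ^M`: vectors with nonnegative coordinates summing to `λ`. -/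
def simplexSet (M : ℕ) (lam : ℝ) : Set (Fin M → ℝ) :=
  {θ | (∀ j, 0 ≤ θ j) ∧ ∑ j, θ j = lam}

/-- The `ℓ₁`-norm `‖z‖₁ = Σ_j |z^{(j)}|` on `ℝ^M`. -/
def l1norm {M : ℕ} (z : Fin M → ℝ) : ℝ := ∑ j, |z j|

/-- The sup-norm `‖z‖_∞ = max_j |z^{(j)}|` on `ℝ^M`. -/
def linfnorm {M : ℕ} (z : Fin M → ℝ) : ℝ := ⨆ j, |z j|

/-- `V : Θ → ℝ` is `α`-strongly convex w.r.t. `‖·‖₁`: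
`V(sx+(1−s)y) ≤ sV(x)+(1−s)V(y) − (α/2)s(1−s)‖x−y‖₁²` for `x, y ∈ Θ`, `s ∈ [0,1]`. -/
def StronglyConvexL1 {M : ℕ} (Θ : Set (Fin M → ℝ)) (α : ℝ) (V : (Fin M → ℝ) → ℝ) : Prop :=
  ∀ x ∈ Θ, ∀ y ∈ Θ, ∀ s ∈ Set.Icc (0 : ℝ) 1,
    V (s • x + (1 - s) • y) ≤
      s * V x + (1 - s) * V y - α / 2 * (s * (1 - s)) * (l1norm (x - y)) ^ 2

/-- The entropy proxy function `V(θ) = λ ln(M/λ) + Σ_j θ^{(j)} ln θ^{(j)}`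
(with the convention `0 ln 0 = 0`, which holds for `Real.log` since `Real.log 0 = 0`). -/
def entV (M : ℕ) (lam : ℝ) (θ : Fin M → ℝ) : ℝ :=
  lam * Real.log (M / lam) + ∑ j, θ j * Real.log (θ j)


theorem l1norm_nonneg {M : ℕ} (z : Fin M → ℝ) : 0 ≤ l1norm z :=
  Finset.sum_nonneg fun _ _ => abs_nonneg _

theorem linfnorm_nonneg {M : ℕ} (z : Fin M → ℝ) : 0 ≤ linfnorm z :=
  Real.iSup_nonneg fun _ => abs_nonneg _

theorem l1norm_sub_comm {M : ℕ} (x y : Fin M → ℝ) : l1norm (x - y) = l1norm (y - x) := by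
  simp only [l1norm, Pi.sub_apply, abs_sub_comm]

theorem sum_mul_le_linfnorm_mul_l1norm {M : ℕ} (z u : Fin M → ℝ) :
    ∑ j, z j * u j ≤ linfnorm z * l1norm u := by
  rw [l1norm, Finset.mul_sum]
  refine Finset.sum_le_sum fun j _ => ?_
  calc z j * u j ≤ |z j * u j| := le_abs_self _
    _ = |z j| * |u j| := abs_mul _ _
    _ ≤ linfnorm z * |u j| := by
      refine mul_le_mul_of_nonneg_right ?_ (abs_nonneg _)
      exact le_ciSup (f := fun j => |z j|) (Set.finite_range _).bddAbove j

theorem le_of_forall_one_sub_mul_le {A c : ℝ} (hc : 0 ≤ c)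
    (h : ∀ s : ℝ, 0 < s → s < 1 → (1 - s) * c ≤ A) : c ≤ A := by
  by_contra! hlt
  have hA : 0 ≤ A := by linarith [h (1 / 2) (by norm_num) (by norm_num)]
  have hc' : 0 < c := by linarith
  -- This `s` makes `(1 - s) * c` the midpoint of `A` and `c`.
  have hs := h ((c - A) / (2 * c)) (div_pos (by linarith) (by linarith))
    (by rw [div_lt_one (by linarith)]; linarith)
  have he : (1 - (c - A) / (2 * c)) * c = (c + A) / 2 := by
    field_simp
    ring
  linarith

/-- Quadratic growth at a minimizer `p` of `θ ↦ zᵀθ + β V(θ)`: compare the value at `p` with the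
value at `s θ + (1 - s) p`, divide by `s` and let `s → 0`. -/
theorem quadratic_growth {M : ℕ} {Θ : Set (Fin M → ℝ)} (hΘ : Convex ℝ Θ) {α β : ℝ}
    (hβ : 0 < β) (hα : 0 < α) {V : (Fin M → ℝ) → ℝ} (hV : StronglyConvexL1 Θ α V)
    {z p : Fin M → ℝ} (hp : p ∈ Θ)
    (hmin : ∀ θ ∈ Θ, (∑ j, z j * p j) + β * V p ≤ (∑ j, z j * θ j) + β * V θ)
    {θ : Fin M → ℝ} (hθ : θ ∈ Θ) :
    (∑ j, z j * p j) + β * V p + α * β / 2 * l1norm (θ - p) ^ 2 ≤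
      (∑ j, z j * θ j) + β * V θ := by
  suffices h : α * β / 2 * l1norm (θ - p) ^ 2 ≤
      (∑ j, z j * θ j) + β * V θ - ((∑ j, z j * p j) + β * V p) by linarith
  refine le_of_forall_one_sub_mul_le (by positivity) fun s hs0 hs1 => ?_
  have hmem : s • θ + (1 - s) • p ∈ Θ := hΘ hθ hp hs0.le (by linarith) (by ring)
  have h1 := hmin _ hmem
  have h2 := mul_le_mul_of_nonneg_left (hV θ hθ p hp s ⟨hs0.le, hs1.le⟩) hβ.le
  have hlin : ∑ j, z j * (s • θ + (1 - s) • p) j =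
      s * (∑ j, z j * θ j) + (1 - s) * ∑ j, z j * p j := by
    rw [Finset.mul_sum, Finset.mul_sum, ← Finset.sum_add_distrib]
    refine Finset.sum_congr rfl fun j _ => ?_
    simp only [Pi.add_apply, Pi.smul_apply, smul_eq_mul]
    ring
  rw [hlin] at h1
  refine le_of_mul_le_mul_left ?_ hs0
  linarith

/-- Let `Θ ⊆ ℝ^M` be convex and closed, `β > 0`, and let `V : Θ → ℝ` be
`α`-strongly convex w.r.t. `‖·‖₁` (`α > 0`) and lower semicontinuous on `Θ`.  Assume that
for every `z ∈ ℝ^M` the function `θ ↦ zᵀθ + β V(θ)` attains its minimum over `Θ` at `x(z)`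
(the minimizer being unique).  Then `‖x(z₁) − x(z₂)‖₁ ≤ (1/(αβ)) ‖z₁ − z₂‖_∞`. -/
theorem minimizer_map_lipschitz (M : ℕ) (Θ : Set (Fin M → ℝ))
    (hΘconv : Convex ℝ Θ) (hΘclosed : IsClosed Θ)
    (β α : ℝ) (hβ : 0 < β) (hα : 0 < α)
    (V : (Fin M → ℝ) → ℝ) (hV : StronglyConvexL1 Θ α V)
    (hVlsc : LowerSemicontinuousOn V Θ)
    (x : (Fin M → ℝ) → Fin M → ℝ)
    (hxmem : ∀ z, x z ∈ Θ)
    (hxmin : ∀ z, ∀ θ ∈ Θ,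
      (∑ j, z j * x z j) + β * V (x z) ≤ (∑ j, z j * θ j) + β * V θ)
    (z₁ z₂ : Fin M → ℝ) :
    l1norm (x z₁ - x z₂) ≤ 1 / (α * β) * linfnorm (z₁ - z₂) := by
  have h1 := quadratic_growth hΘconv hβ hα hV (hxmem z₁) (hxmin z₁) (hxmem z₂)
  have h2 := quadratic_growth hΘconv hβ hα hV (hxmem z₂) (hxmin z₂) (hxmem z₁)
  have h3 := sum_mul_le_linfnorm_mul_l1norm (z₁ - z₂) (x z₂ - x z₁)
  rw [l1norm_sub_comm (x z₂)] at h1 h3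
  have hsum : ∑ j, (z₁ - z₂) j * (x z₂ - x z₁) j =
      (∑ j, z₁ j * x z₂ j) - (∑ j, z₁ j * x z₁ j)
        - (∑ j, z₂ j * x z₂ j) + ∑ j, z₂ j * x z₁ j := by
    simp only [← Finset.sum_sub_distrib, ← Finset.sum_add_distrib, Pi.sub_apply]
    exact Finset.sum_congr rfl fun j _ => by ring
  rw [hsum] at h3
  have hαβ : 0 < α * β := mul_pos hα hβ
  rw [one_div_mul_eq_div, le_div_iff₀ hαβ]
  rcases (l1norm_nonneg (x z₁ - x z₂)).eq_or_lt with h0 | h0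
  · rw [← h0, zero_mul]
    exact linfnorm_nonneg _
  · refine le_of_mul_le_mul_right ?_ h0
    linarith

end
end

section
/- Let λ > 0 and let M ≥ 2 be an integer. For all x, y ∈ Θ_{M,λ} whose coordinates are all strictly positive: Σ_{j=1}^M (x^{(j)} − y^{(j)})(ln x^{(j)} − ln y^{(j)}) ≥ (1/λ) ‖x − y‖₁². -/
/-!
Coordinatewise, the logarithmic mean `(a - b) / (ln a - ln b)` is at most the arithmetic mean
`(a + b) / 2`, so `(a - b)(ln a - ln b) ≥ (a - b)² / ((a + b) / 2)`
(`sq_div_mean_le_sub_mul_log_sub`). The Cauchy–Schwarz inequality in Engel form,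
`(∑ |d_j|)² / ∑ m_j ≤ ∑ |d_j|² / m_j`, with `d_j = x_j - y_j` and `m_j = (x_j + y_j) / 2`, then
gives the claim, because both points lie on the simplex and hence `∑ m_j = λ`.
-/

open Finset

noncomputable section

/-- The logarithmic mean of two positive reals is at most their arithmetic mean, with
denominators arranged so that `a = b` is allowed. -/
lemma sq_div_mean_le_sub_mul_log_sub {a b : ℝ} (ha : 0 < a) (hb : 0 < b) :
    |a - b| ^ 2 / ((a + b) / 2) ≤ (a - b) * (Real.log a - Real.log b) := by
  wlog hab : b ≤ a generalizing a b
  · have h := this hb ha (le_of_not_ge hab)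
    rw [abs_sub_comm, add_comm b a] at h
    linarith
  -- `2t / (t + 2) ≤ ln (1 + t)` at `t = (a - b) / b`, for which `1 + t = a / b`.
  have h := Real.le_log_one_add_of_nonneg (div_nonneg (sub_nonneg.2 hab) hb.le)
  have h1 : 1 + (a - b) / b = a / b := by field_simp; ring
  have h2 : 2 * ((a - b) / b) / ((a - b) / b + 2) = (a - b) / ((a + b) / 2) := by
    have h3 : (a - b) / b + 2 = (a + b) / b := by field_simp; ring
    rw [h3]
    field_simp
  rw [h1, h2, Real.log_div ha.ne' hb.ne'] at h
  calc |a - b| ^ 2 / ((a + b) / 2) = (a - b) * ((a - b) / ((a + b) / 2)) := by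
        rw [sq_abs]; ring
    _ ≤ _ := mul_le_mul_of_nonneg_left h (sub_nonneg.2 hab)

/-- Let `λ > 0` and `M ≥ 2` an integer.  For all `x, y ∈ Θ_{M,λ}` with all
coordinates strictly positive:
`Σ_j (x^{(j)} − y^{(j)})(ln x^{(j)} − ln y^{(j)}) ≥ (1/λ) ‖x − y‖₁²`. -/
theorem entropy_gradient_monotonicity (lam : ℝ) (hlam : 0 < lam) (M : ℕ) (hM : 2 ≤ M)
    (x y : Fin M → ℝ) (hx : x ∈ simplexSet M lam) (hy : y ∈ simplexSet M lam)
    (hxpos : ∀ j, 0 < x j) (hypos : ∀ j, 0 < y j) :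
    1 / lam * (l1norm (x - y)) ^ 2 ≤
      ∑ j, (x j - y j) * (Real.log (x j) - Real.log (y j)) := by
  have hsum : ∑ j, (x j + y j) / 2 = lam := by
    rw [← Finset.sum_div, Finset.sum_add_distrib, hx.2, hy.2]
    ring
  calc 1 / lam * (l1norm (x - y)) ^ 2
      = (∑ j, |x j - y j|) ^ 2 / ∑ j, (x j + y j) / 2 := by
        rw [hsum, one_div_mul_eq_div]
        rfl
    _ ≤ ∑ j, |x j - y j| ^ 2 / ((x j + y j) / 2) :=
        Finset.sq_sum_div_le_sum_sq_div _ _ fun j _ => half_pos (add_pos (hxpos j) (hypos j))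
    _ ≤ _ := Finset.sum_le_sum fun j _ => sq_div_mean_le_sub_mul_log_sub (hxpos j) (hypos j)

end
end

section
/- Let λ > 0, β > 0, and M ≥ 2 an integer, and define W_β : ℝ^M → ℝ by W_β(z) = λβ ln( (1/M) Σ_{k=1}^M e^{−z^{(k)}/β} ). Then W_β is continuously differentiable and for all z₁, z₂ ∈ ℝ^M: ‖∇W_β(z₁) − ∇W_β(z₂)‖₁ ≤ (λ/β) ‖z₁ − z₂‖∞. -/
/-!
The gradient of `W_β` at `z` is `-λ` times the vector of Gibbs weights of `-z/β`
(`hasDerivAt_logSumExp_line`), so the claim says that softmax is 1-Lipschitz from the sup-norm to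
the `ℓ₁`-norm (`sum_abs_gibbsWeight_sub_le`). Along the segment `a + t d` the weight `p_j` has
derivative `p_j (d_j - Σ_k p_k d_k)`; hence the `ℓ₁`-norm of the derivative is the mean absolute
deviation of `d` under the probability vector `p`. By Cauchy–Schwarz this is at most the standard
deviation of `d`, hence at most `‖d‖_∞` (`sum_weight_abs_deviation_le`). The mean value inequality
concludes.
-/

open Finset

noncomputable section

/-- The softmax (Gibbs) weights `e^{a_j} / Σ_k e^{a_k}` of a vector `a`. -/
def gibbsWeight {M : ℕ} (a : Fin M → ℝ) (j : Fin M) : ℝ :=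
  Real.exp (a j) / ∑ k, Real.exp (a k)

lemma gibbs_partition_pos {M : ℕ} (hM : 0 < M) (a : Fin M → ℝ) : 0 < ∑ k, Real.exp (a k) :=
  Finset.sum_pos (fun _ _ => Real.exp_pos _) ⟨⟨0, hM⟩, Finset.mem_univ _⟩

lemma gibbsWeight_nonneg {M : ℕ} (a : Fin M → ℝ) (j : Fin M) : 0 ≤ gibbsWeight a j :=
  div_nonneg (Real.exp_pos _).le (Finset.sum_nonneg fun _ _ => (Real.exp_pos _).le)

lemma sum_gibbsWeight {M : ℕ} (hM : 0 < M) (a : Fin M → ℝ) : ∑ j, gibbsWeight a j = 1 := by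
  simp only [gibbsWeight]
  rw [← Finset.sum_div, div_self (gibbs_partition_pos hM a).ne']

/-- The mean absolute deviation of a random variable is at most its standard deviation, which is
at most its sup-norm. -/
lemma sum_weight_abs_deviation_le {M : ℕ} (p d : Fin M → ℝ) (D : ℝ) (hp : ∀ j, 0 ≤ p j)
    (hsum : ∑ j, p j = 1) (hD : 0 ≤ D) (hd : ∀ j, |d j| ≤ D) :
    ∑ j, p j * |d j - ∑ k, p k * d k| ≤ D := by
  set m := ∑ k, p k * d k with hm
  apply le_of_sq_le_sq _ hD
  have hcs := Finset.sum_sq_le_sum_mul_sum_of_sq_le_mul Finset.univ (r := fun j => p j * |d j - m|)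
    (f := p) (g := fun j => p j * (d j - m) ^ 2) (fun j _ => hp j)
    (fun j _ => mul_nonneg (hp j) (sq_nonneg _)) (fun j _ => le_of_eq (by rw [mul_pow, sq_abs]; ring))
  rw [hsum, one_mul] at hcs
  have hvar : ∑ j, p j * (d j - m) ^ 2 = ∑ j, p j * d j ^ 2 - m ^ 2 := by
    have h : ∀ j, p j * (d j - m) ^ 2 = p j * d j ^ 2 - 2 * m * (p j * d j) + m ^ 2 * p j :=
      fun j => by ring
    simp only [h, Finset.sum_add_distrib, Finset.sum_sub_distrib, ← Finset.mul_sum, hsum, ← hm]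
    ring
  have hsq : ∑ j, p j * d j ^ 2 ≤ ∑ j, p j * D ^ 2 :=
    Finset.sum_le_sum fun j _ =>
      mul_le_mul_of_nonneg_left (sq_le_sq' (abs_le.1 (hd j)).1 (abs_le.1 (hd j)).2) (hp j)
  rw [← Finset.sum_mul, hsum, one_mul] at hsq
  nlinarith [sq_nonneg m]

lemma hasDerivAt_exp_line (x y t : ℝ) :
    HasDerivAt (fun s : ℝ => Real.exp (x + s * y)) (Real.exp (x + t * y) * y) t := by
  have h : HasDerivAt (fun s : ℝ => x + s * y) y t := by
    simpa using ((hasDerivAt_id t).mul_const y).const_add x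
  exact h.exp

lemma hasDerivAt_gibbsWeight_line {M : ℕ} (hM : 0 < M) (a d : Fin M → ℝ) (j : Fin M) (t : ℝ) :
    HasDerivAt (fun s : ℝ => gibbsWeight (fun k => a k + s * d k) j)
      (gibbsWeight (fun k => a k + t * d k) j *
        (d j - ∑ k, gibbsWeight (fun k => a k + t * d k) k * d k)) t := by
  have hpos := gibbs_partition_pos hM (fun k => a k + t * d k)
  have h := (hasDerivAt_exp_line (a j) (d j) t).div
    (HasDerivAt.fun_sum (u := Finset.univ) fun k _ => hasDerivAt_exp_line (a k) (d k) t) hpos.ne'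
  refine h.congr_deriv ?_
  have hmean : ∑ k, gibbsWeight (fun k => a k + t * d k) k * d k
      = (∑ k, Real.exp (a k + t * d k) * d k) / ∑ k, Real.exp (a k + t * d k) := by
    rw [Finset.sum_div]
    exact Finset.sum_congr rfl fun k _ => by simp only [gibbsWeight]; ring
  rw [hmean]
  simp only [gibbsWeight]
  field_simp

/-- Softmax is 1-Lipschitz from the sup-norm to the `ℓ₁`-norm: testing the difference against its
own sign vector reduces the claim to the mean value inequality along a segment. -/
lemma sum_abs_gibbsWeight_sub_le {M : ℕ} (hM : 0 < M) (a b : Fin M → ℝ) (D : ℝ)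
    (hD : ∀ j, |b j - a j| ≤ D) : ∑ j, |gibbsWeight b j - gibbsWeight a j| ≤ D := by
  have hD0 : 0 ≤ D := (abs_nonneg _).trans (hD ⟨0, hM⟩)
  set d : Fin M → ℝ := fun j => b j - a j with hd
  set σ : Fin M → ℝ := fun j => SignType.sign (gibbsWeight b j - gibbsWeight a j) with hσ
  have hσ1 : ∀ j, |σ j| ≤ 1 := fun j => by
    simp only [hσ]
    rcases SignType.sign (gibbsWeight b j - gibbsWeight a j) with _ | _ | _ <;> simp
  have hderiv : ∀ t : ℝ, HasDerivAt
      (fun s : ℝ => ∑ j, σ j * gibbsWeight (fun k => a k + s * d k) j)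
      (∑ j, σ j * (gibbsWeight (fun k => a k + t * d k) j *
        (d j - ∑ k, gibbsWeight (fun k => a k + t * d k) k * d k))) t := fun t =>
    HasDerivAt.fun_sum fun j _ => (hasDerivAt_gibbsWeight_line hM a d j t).const_mul (σ j)
  have hbound : ∀ t : ℝ, ‖∑ j, σ j * (gibbsWeight (fun k => a k + t * d k) j *
      (d j - ∑ k, gibbsWeight (fun k => a k + t * d k) k * d k))‖ ≤ D := fun t => by
    refine le_trans ?_ (sum_weight_abs_deviation_le (gibbsWeight (fun k => a k + t * d k)) d D
      (gibbsWeight_nonneg _) (sum_gibbsWeight hM _) hD0 hD)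
    refine (norm_sum_le _ _).trans (Finset.sum_le_sum fun j _ => ?_)
    rw [Real.norm_eq_abs, abs_mul, abs_mul, abs_of_nonneg (gibbsWeight_nonneg _ j)]
    exact mul_le_of_le_one_left (mul_nonneg (gibbsWeight_nonneg _ j) (abs_nonneg _)) (hσ1 j)
  have hmv := Convex.norm_image_sub_le_of_norm_hasDerivWithin_le (s := Set.univ) (x := (0 : ℝ))
    (y := 1) (fun t _ => (hderiv t).hasDerivWithinAt) (fun t _ => hbound t) convex_univ
    (Set.mem_univ _) (Set.mem_univ _)
  have h1 : (fun k => a k + 1 * d k) = b := by ext k; simp [hd]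
  have h0 : (fun k => a k + 0 * d k) = a := by ext k; simp
  simp only [h1, h0, ← Finset.sum_sub_distrib, ← mul_sub, sub_zero, norm_one, mul_one] at hmv
  refine le_trans (le_of_eq ?_) ((le_abs_self _).trans hmv)
  exact Finset.sum_congr rfl fun j _ => (sign_mul_self _).symm

/-- The partial derivatives of `W_β` are `-λ` times the Gibbs weights of `-z/β`. -/
lemma hasDerivAt_logSumExp_line {M : ℕ} (hM : 0 < M) (lam β : ℝ) (hβ : 0 < β)
    (z : Fin M → ℝ) (j : Fin M) :
    HasDerivAt (fun t : ℝ => lam * β *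
        Real.log ((1 / M) * ∑ k, Real.exp (-((z + t • (Pi.single j (1 : ℝ) : Fin M → ℝ)) k) / β)))
      (-lam * gibbsWeight (fun k => -(z k) / β) j) 0 := by
  have hM' : (0 : ℝ) < M := by exact_mod_cast hM
  have hpos := gibbs_partition_pos hM (fun k => -(z k) / β)
  have hsum := HasDerivAt.fun_sum (u := Finset.univ) fun k _ =>
    hasDerivAt_exp_line (-(z k) / β) (-(Pi.single j (1 : ℝ) : Fin M → ℝ) k / β) 0
  have h := ((hsum.const_mul (1 / (M : ℝ))).log
    (by simpa using ⟨hM.ne', hpos.ne'⟩)).const_mul (lam * β)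
  refine (h.congr_deriv ?_).congr_of_eventuallyEq (Filter.Eventually.of_forall fun t => ?_)
  · have hs : ∑ k, Real.exp (-(z k) / β) * (-(Pi.single j (1 : ℝ) : Fin M → ℝ) k / β)
        = -Real.exp (-(z j) / β) / β := by
      rw [Finset.sum_eq_single j (fun k _ hk => by simp [hk]) (by simp)]
      simp only [Pi.single_eq_same]
      ring
    simp only [zero_mul, add_zero, hs, gibbsWeight]
    field_simp
  · have he : ∀ k, -((z + t • (Pi.single j (1 : ℝ) : Fin M → ℝ)) k) / β
        = -(z k) / β + t * (-(Pi.single j (1 : ℝ) : Fin M → ℝ) k / β) := fun k => by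
      simp only [Pi.add_apply, Pi.smul_apply, smul_eq_mul]
      ring
    simp only [he]

/-- For `λ, β > 0` and `M ≥ 2`, the function
`W_β(z) = λβ ln((1/M) Σ_k e^{−z^{(k)}/β})` on `ℝ^M` is continuously differentiable and its
gradient satisfies `‖∇W_β(z₁) − ∇W_β(z₂)‖₁ ≤ (λ/β) ‖z₁ − z₂‖_∞` for all `z₁, z₂`. -/
theorem entropy_betaConj_gradient_lipschitz (lam β : ℝ) (hlam : 0 < lam) (hβ : 0 < β)
    (M : ℕ) (hM : 2 ≤ M)
    (W : (Fin M → ℝ) → ℝ)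
    (hW : ∀ z : Fin M → ℝ,
      W z = lam * β * Real.log ((1 / M) * ∑ k, Real.exp (-(z k) / β))) :
    ContDiff ℝ 1 W ∧
    ∀ z₁ z₂ : Fin M → ℝ,
      l1norm (fun j =>
          fderiv ℝ W z₁ (Pi.single j (1 : ℝ)) - fderiv ℝ W z₂ (Pi.single j (1 : ℝ))) ≤
        lam / β * linfnorm (z₁ - z₂) := by
  have hM0 : 0 < M := by omega
  have hM' : (0 : ℝ) < M := by exact_mod_cast hM0
  have hWeq : W = fun z => lam * β * Real.log ((1 / M) * ∑ k, Real.exp (-(z k) / β)) :=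
    funext hW
  have hcd : ContDiff ℝ 1 W := by
    rw [hWeq]
    refine contDiff_const.mul (ContDiff.log ?_ fun z => ?_)
    · fun_prop
    · exact (mul_pos (by positivity) (gibbs_partition_pos hM0 fun k => -(z k) / β)).ne'
  refine ⟨hcd, fun z₁ z₂ => ?_⟩
  have hgrad : ∀ z j, fderiv ℝ W z (Pi.single j (1 : ℝ))
      = -lam * gibbsWeight (fun k => -(z k) / β) j := fun z j => by
    have h1 : HasLineDerivAt ℝ W (fderiv ℝ W z (Pi.single j (1 : ℝ))) z (Pi.single j (1 : ℝ)) :=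
      ((hcd.differentiable one_ne_zero) z).hasFDerivAt.hasLineDerivAt _
    have h2 := hasDerivAt_logSumExp_line hM0 lam β hβ z j
    simp only [← hW] at h2
    exact HasDerivAt.unique h1 h2
  have hle : ∀ j, |(z₁ - z₂) j| ≤ linfnorm (z₁ - z₂) := fun j =>
    le_ciSup (f := fun j => |(z₁ - z₂) j|) (Set.finite_range _).bddAbove j
  have hmain := sum_abs_gibbsWeight_sub_le hM0 (fun k => -(z₁ k) / β) (fun k => -(z₂ k) / β)
    (linfnorm (z₁ - z₂) / β) fun j => by
      have : -(z₂ j) / β - -(z₁ j) / β = (z₁ - z₂) j / β := by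
        simp only [Pi.sub_apply]; ring
      rw [this, abs_div, abs_of_pos hβ]
      exact div_le_div_of_nonneg_right (hle j) hβ.le
  simp only [l1norm, hgrad]
  calc ∑ j, |-lam * gibbsWeight (fun k => -(z₁ k) / β) j
          - -lam * gibbsWeight (fun k => -(z₂ k) / β) j|
      = lam * ∑ j, |gibbsWeight (fun k => -(z₂ k) / β) j
          - gibbsWeight (fun k => -(z₁ k) / β) j| := by
        rw [Finset.mul_sum]
        refine Finset.sum_congr rfl fun j _ => ?_
        rw [← abs_of_pos hlam, ← abs_mul, abs_of_pos hlam]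
        congr 1
        ring
    _ ≤ lam * (linfnorm (z₁ - z₂) / β) := mul_le_mul_of_nonneg_left hmain hlam.le
    _ = lam / β * linfnorm (z₁ - z₂) := by ring

end
end

section
/- Let M ≥ 1 be an integer, let a_1, …, a_M be nonnegative reals with Σ_{i=1}^M a_i = 1, and let y_1, …, y_M ∈ [−1, 1]. Then Σ_{i=1}^M Σ_{j ≠ i} a_i a_j |y_i − y_j| ≤ 1. -/
open Finset

/-!
For `x, y ∈ [-1, 1]` one has `|x - y| ≤ 1 - x * y`, because `(1 - x) * (1 + y)` and
`(1 + x) * (1 - y)` are nonnegative. The weighted sum of `1 - y i * y j` over all pairs equals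
`1 - (∑ i, a i * y i) ^ 2`, which is at most `1`.
-/

/-- Let `M ≥ 1`, let `a_1, …, a_M` be nonnegative reals summing to `1`,
and let `y_1, …, y_M ∈ [−1, 1]`. Then `Σ_i Σ_{j ≠ i} a_i a_j |y_i − y_j| ≤ 1`. -/
theorem sum_offdiag_weighted_abs_diff_le_one (M : ℕ) (hM : 1 ≤ M)
    (a y : Fin M → ℝ) (ha : ∀ i, 0 ≤ a i) (hsum : ∑ i, a i = 1)
    (hy : ∀ i, y i ∈ Set.Icc (-1 : ℝ) 1) :
    ∑ i, ∑ j ∈ Finset.univ.erase i, a i * a j * |y i - y j| ≤ 1 := by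
  have key : ∀ i j, |y i - y j| ≤ 1 - y i * y j := by
    intro i j
    obtain ⟨h1, h2⟩ := hy i
    obtain ⟨h3, h4⟩ := hy j
    rw [abs_le]
    constructor
    · nlinarith [mul_nonneg (by linarith : 0 ≤ 1 + y i) (by linarith : 0 ≤ 1 - y j)]
    · nlinarith [mul_nonneg (by linarith : 0 ≤ 1 - y i) (by linarith : 0 ≤ 1 + y j)]
  calc ∑ i, ∑ j ∈ Finset.univ.erase i, a i * a j * |y i - y j|
      ≤ ∑ i, ∑ j, a i * a j * |y i - y j| := by
        refine Finset.sum_le_sum fun i _ => ?_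
        exact Finset.sum_le_sum_of_subset_of_nonneg (Finset.erase_subset _ _)
          fun j _ _ => mul_nonneg (mul_nonneg (ha i) (ha j)) (abs_nonneg _)
    _ ≤ ∑ i, ∑ j, (a i * a j - (a i * y i) * (a j * y j)) := by
        refine Finset.sum_le_sum fun i _ => Finset.sum_le_sum fun j _ => ?_
        have h := mul_le_mul_of_nonneg_left (key i j) (mul_nonneg (ha i) (ha j))
        linarith
    _ = 1 - (∑ i, a i * y i) ^ 2 := by
        simp only [Finset.sum_sub_distrib, ← Finset.mul_sum, ← Finset.sum_mul, hsum]
        ring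
    _ ≤ 1 := by linarith [sq_nonneg (∑ i, a i * y i)]
end
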